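/- arXiv:1606.05805 — 2 statements merged into one kernel-verified Lean document; each statement's English description precedes it below -/
import Mathlib

section
/- Let Ŝ be the Doob h-transform of two-dimensional simple random walk with respect to the potential kernel a (transition probability a(y)/(4a(x)) from x ≠ 0 to y ~ x). Then the process 1/a(Ŝ_n), stopped at the first time Ŝ hits the set consisting of the four neighbors of the origin, is a martingale. -/
open MeasureTheory Filter

/-- Squared norm on the lattice. -/
def nsq (x : ℤ × ℤ) : ℤ := x.1 ^ 2 + x.2 ^ 2

/-- Lyapunov function `log (|x|^2 - 1)`. -/
noncomputable def lyap (x : ℤ × ℤ) : ℝ := Real.log ((nsq x : ℝ) - 1)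

lemma int_sq_ge (x : ℤ) : 2 * |x| ≤ x ^ 2 + 1 := by
  have := sq_nonneg (|x| - 1)
  have h2 := sq_abs x
  nlinarith

lemma nbr_aux (p q : ℤ) (h : 5 ≤ p ^ 2 + q ^ 2) : 2 ≤ (p + 1) ^ 2 + q ^ 2 := by
  by_contra hc
  push Not at hc
  have h1 : q ^ 2 ≤ 1 := by nlinarith [sq_nonneg (p + 1)]
  have h2 : (p + 1) ^ 2 ≤ 1 := by nlinarith [sq_nonneg q]
  have hp : -2 ≤ p ∧ p ≤ 0 := by constructor <;> nlinarith
  have hq : -1 ≤ q ∧ q ≤ 1 := by constructor <;> nlinarith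
  obtain ⟨hp1, hp2⟩ := hp
  obtain ⟨hq1, hq2⟩ := hq
  interval_cases p <;> interval_cases q <;> simp_all

lemma nbr_ge (x : ℤ × ℤ) (h : 5 ≤ nsq x) :
    2 ≤ nsq (x + (1, 0)) ∧ 2 ≤ nsq (x - (1, 0)) ∧ 2 ≤ nsq (x + (0, 1)) ∧
      2 ≤ nsq (x - (0, 1)) := by
  obtain ⟨p, q⟩ := x
  simp only [nsq, Prod.mk_add_mk, Prod.mk_sub_mk, add_zero, sub_zero] at *
  refine ⟨nbr_aux p q h, ?_, ?_, ?_⟩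
  · have := nbr_aux (-p) q (by nlinarith)
    nlinarith
  · have := nbr_aux q p (by nlinarith)
    nlinarith
  · have := nbr_aux (-q) p (by nlinarith)
    nlinarith

lemma lyap_super (x : ℤ × ℤ) (h : 5 ≤ nsq x) :
    lyap (x + (1, 0)) + lyap (x - (1, 0)) + lyap (x + (0, 1)) + lyap (x - (0, 1))
      < 4 * lyap x := by
  obtain ⟨h1, h2, h3, h4⟩ := nbr_ge x h
  have pos : ∀ y, 2 ≤ nsq y → (0 : ℝ) < (nsq y : ℝ) - 1 := by
    intro y hy
    have : (2 : ℝ) ≤ nsq y := by exact_mod_cast hy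
    linarith
  have p1 := pos _ h1
  have p2 := pos _ h2
  have p3 := pos _ h3
  have p4 := pos _ h4
  unfold lyap
  rw [← Real.log_mul p1.ne' p2.ne', ← Real.log_mul (mul_pos p1 p2).ne' p3.ne',
    ← Real.log_mul (mul_pos (mul_pos p1 p2) p3).ne' p4.ne']
  have : (4 : ℝ) * Real.log ((nsq x : ℝ) - 1) = Real.log (((nsq x : ℝ) - 1) ^ 4) := by
    rw [Real.log_pow]; norm_num
  rw [this]
  apply Real.log_lt_log (mul_pos (mul_pos (mul_pos p1 p2) p3) p4)
  obtain ⟨p, q⟩ := x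
  have h5 : (5 : ℝ) ≤ (p : ℝ) ^ 2 + (q : ℝ) ^ 2 := by
    have : ((5 : ℤ) : ℝ) ≤ (nsq (p, q) : ℝ) := by exact_mod_cast h
    simpa [nsq] using this
  simp only [nsq, Prod.mk_add_mk, Prod.mk_sub_mk, add_zero, sub_zero]
  push_cast
  generalize (p : ℝ) = P at *
  generalize (q : ℝ) = Q at *
  have key : (P ^ 2 + Q ^ 2 - 1) ^ 4 - ((P + 1) ^ 2 + Q ^ 2 - 1) * ((P - 1) ^ 2 + Q ^ 2 - 1)
      * (P ^ 2 + (Q + 1) ^ 2 - 1) * (P ^ 2 + (Q - 1) ^ 2 - 1)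
      = 4 * (P ^ 2 - Q ^ 2) ^ 2 + (2 * (P ^ 2 + Q ^ 2) ^ 2 - 4 * (P ^ 2 + Q ^ 2) + 1) := by
    ring
  have : 0 < 2 * (P ^ 2 + Q ^ 2) ^ 2 - 4 * (P ^ 2 + Q ^ 2) + 1 := by nlinarith
  nlinarith [sq_nonneg (P ^ 2 - Q ^ 2)]

lemma finite_nsq_le (N : ℤ) : {x : ℤ × ℤ | nsq x ≤ N}.Finite := by
  apply ((Set.finite_Icc (-N) N).prod (Set.finite_Icc (-N) N)).subset
  rintro ⟨p, q⟩ h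
  simp only [nsq, Set.mem_setOf_eq] at h
  have hp : |p| ≤ p ^ 2 := by
    rw [← sq_abs]; exact Int.le_self_sq _
  have hq : |q| ≤ q ^ 2 := by
    rw [← sq_abs]; exact Int.le_self_sq _
  have h1 := abs_le.1 (show |p| ≤ N by nlinarith [sq_nonneg q])
  have h2 := abs_le.1 (show |q| ≤ N by nlinarith [sq_nonneg p])
  exact ⟨h1, h2⟩

lemma nsq_pos (x : ℤ × ℤ) (h : x ≠ 0) : 1 ≤ nsq x := by
  by_contra hc
  apply h
  unfold nsq at hc
  have h1 : x.1 ^ 2 = 0 := by nlinarith [sq_nonneg x.1, sq_nonneg x.2]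
  have h2 : x.2 ^ 2 = 0 := by nlinarith [sq_nonneg x.1, sq_nonneg x.2]
  exact Prod.ext (by simpa using h1) (by simpa using h2)

lemma ne_zero_of_nsq (x : ℤ × ℤ) (h : 1 ≤ nsq x) : x ≠ 0 := by
  rintro rfl
  simp [nsq] at h

/-- Minimum principle: `a` is bounded below away from the origin. -/
lemma a_lower (a : ℤ × ℤ → ℝ)
    (hapos : ∀ x : ℤ × ℤ, x ≠ 0 → 0 < a x)
    (haharm : ∀ x : ℤ × ℤ, x ≠ 0 →
      (a (x + (1, 0)) + a (x - (1, 0)) + a (x + (0, 1)) + a (x - (0, 1))) / 4 = a x) :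
    ∃ c : ℝ, 0 < c ∧ ∀ x : ℤ × ℤ, x ≠ 0 → c ≤ a x := by
  have hfin : {x : ℤ × ℤ | 1 ≤ nsq x ∧ nsq x ≤ 4}.Finite :=
    (finite_nsq_le 4).subset fun x hx => hx.2
  obtain ⟨x0, hx0, hmin⟩ := Set.exists_min_image _ a hfin ⟨(1, 0), by simp [nsq]⟩
  refine ⟨a x0, hapos _ (ne_zero_of_nsq _ hx0.1), fun x hx => ?_⟩
  by_cases hx4 : nsq x ≤ 4
  · exact hmin x ⟨nsq_pos x hx, hx4⟩
  have hx5 : 5 ≤ nsq x := by omega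
  have lyap_nonneg : ∀ y, 2 ≤ nsq y → 0 ≤ lyap y := by
    intro y hy
    have : (2 : ℝ) ≤ nsq y := by exact_mod_cast hy
    exact Real.log_nonneg (by linarith)
  -- the perturbed inequality
  have main : ∀ ε : ℝ, 0 < ε → a x0 ≤ a x + ε * lyap x := by
    intro ε hε
    by_contra hc
    push Not at hc
    have hBfin : {y : ℤ × ℤ | 2 ≤ nsq y ∧ a y + ε * lyap y < a x0}.Finite := by
      apply (finite_nsq_le ⌈Real.exp (a x0 / ε) + 1⌉).subset
      rintro y ⟨hy, hlt⟩
      have hy0 := hapos y (ne_zero_of_nsq y (by omega))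
      have h1 : lyap y < a x0 / ε := by
        rw [lt_div_iff₀ hε]; linarith
      have hy2 : (2 : ℝ) ≤ nsq y := by exact_mod_cast hy
      have h2 := (Real.log_lt_iff_lt_exp (by linarith)).1 h1
      have h3 : (nsq y : ℝ) ≤ (⌈Real.exp (a x0 / ε) + 1⌉ : ℤ) := by
        have := Int.le_ceil (Real.exp (a x0 / ε) + 1)
        linarith
      exact_mod_cast h3
    obtain ⟨z, hz, hzmin⟩ := Set.exists_min_image _ (fun y => a y + ε * lyap y) hBfin
      ⟨x, by omega, hc⟩
    have hz5 : 5 ≤ nsq z := by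
      by_contra h
      have h1 := hmin z ⟨by have := hz.1; omega, by omega⟩
      have h2 := mul_nonneg hε.le (lyap_nonneg z hz.1)
      have := hz.2
      linarith
    have hall : ∀ y, 2 ≤ nsq y → a z + ε * lyap z ≤ a y + ε * lyap y := by
      intro y hy
      by_cases h : a y + ε * lyap y < a x0
      · exact hzmin y ⟨hy, h⟩
      · have := hz.2
        linarith
    obtain ⟨h1, h2, h3, h4⟩ := nbr_ge z hz5
    have e1 := hall _ h1
    have e2 := hall _ h2
    have e3 := hall _ h3
    have e4 := hall _ h4
    have hs := mul_lt_mul_of_pos_left (lyap_super z hz5) hε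
    have hh := haharm z (ne_zero_of_nsq z (by omega))
    linarith
  by_contra hlt
  push Not at hlt
  have hl := lyap_nonneg x (by omega)
  have := main ((a x0 - a x) / (2 * (lyap x + 1))) (by apply div_pos <;> linarith)
  have h2 : (a x0 - a x) / (2 * (lyap x + 1)) * lyap x ≤ (a x0 - a x) / 2 := by
    rw [div_mul_eq_mul_div, div_le_div_iff₀ (by linarith) (by norm_num)]
    nlinarith
  linarith

/-- The generator computation away from the neighbors of the origin. -/
lemma step_value (a : ℤ × ℤ → ℝ)
    (hapos : ∀ x : ℤ × ℤ, x ≠ 0 → 0 < a x) (x : ℤ × ℤ) (hx : x ≠ 0)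
    (hN : x ∉ ({(1, 0), (-1, 0), (0, 1), (0, -1)} : Set (ℤ × ℤ))) :
    (a (x + (1, 0)) * (1 / a (x + (1, 0))) + a (x - (1, 0)) * (1 / a (x - (1, 0)))
      + a (x + (0, 1)) * (1 / a (x + (0, 1))) + a (x - (0, 1)) * (1 / a (x - (0, 1))))
      / (4 * a x) = 1 / a x := by
  simp only [Set.mem_insert_iff, Set.mem_singleton_iff, not_or] at hN
  obtain ⟨n1, n2, n3, n4⟩ := hN
  have h1 : a (x + (1, 0)) ≠ 0 := (hapos _ fun h => n2 (by
    rw [eq_neg_of_add_eq_zero_left h]; simp)).ne'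
  have h2 : a (x - (1, 0)) ≠ 0 := (hapos _ fun h => n1 (sub_eq_zero.1 h)).ne'
  have h3 : a (x + (0, 1)) ≠ 0 := (hapos _ fun h => n4 (by
    rw [eq_neg_of_add_eq_zero_left h]; simp)).ne'
  have h4 : a (x - (0, 1)) ≠ 0 := (hapos _ fun h => n3 (sub_eq_zero.1 h)).ne'
  have h0 := (hapos x hx).ne'
  rw [mul_one_div_cancel h1, mul_one_div_cancel h2, mul_one_div_cancel h3,
    mul_one_div_cancel h4]
  field_simp
  norm_num

/-- Let `Ŝ` be the Doob h-transform of two-dimensional simple random walk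
with respect to the potential kernel `a` (transition probability `a(y)/(4a(x))` from
`x ≠ 0` to each neighbor `y`). Then `1/a(Ŝ_n)`, stopped at the first time `Ŝ` hits the
four neighbors of the origin, is a martingale. -/
theorem hatS_reciprocal_stopped_martingale
    {Ω : Type*} [m0 : MeasurableSpace Ω] (μ : Measure Ω) [IsProbabilityMeasure μ]
    (ℱ : Filtration ℕ m0)
    (a : ℤ × ℤ → ℝ)
    (ha0 : a 0 = 0)
    (hapos : ∀ x : ℤ × ℤ, x ≠ 0 → 0 < a x)
    (haharm : ∀ x : ℤ × ℤ, x ≠ 0 →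
      (a (x + (1, 0)) + a (x - (1, 0)) + a (x + (0, 1)) + a (x - (0, 1))) / 4 = a x)
    (S : ℕ → Ω → ℤ × ℤ) (hadapted : Adapted ℱ S)
    -- Ŝ lives on ℤ² \ {0}
    (hS0 : ∀ n ω, S n ω ≠ 0)
    -- the Markov step property of the Doob h-transform: from `x ≠ 0` the chain moves to a
    -- neighbor `y` with probability `a(y)/(4a(x))`
    (hstep : ∀ (n : ℕ) (g : ℤ × ℤ → ℝ), (∃ Cg : ℝ, ∀ z, |g z| ≤ Cg) →
      μ[(fun ω => g (S (n + 1) ω)) | ℱ n] =ᵐ[μ]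
        fun ω => (a (S n ω + (1, 0)) * g (S n ω + (1, 0))
          + a (S n ω - (1, 0)) * g (S n ω - (1, 0))
          + a (S n ω + (0, 1)) * g (S n ω + (0, 1))
          + a (S n ω - (0, 1)) * g (S n ω - (0, 1))) / (4 * a (S n ω)))
    -- the first hitting time of the set of the four neighbors of the origin
    (τ : Ω → ℕ∞)
    (hτ : ∀ ω, τ ω = sInf {k : ℕ∞ | ∃ m : ℕ, k = m ∧
      S m ω ∈ ({(1, 0), (-1, 0), (0, 1), (0, -1)} : Set (ℤ × ℤ))}) :
    Martingale (fun (n : ℕ) (ω : Ω) => 1 / a (S ((min (n : ℕ∞) (τ ω)).toNat) ω)) ℱ μ := by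
  classical
  obtain ⟨c, hc, hca⟩ := a_lower a hapos haharm
  set g : ℤ × ℤ → ℝ := fun z => 1 / a z with hg
  set N : Set (ℤ × ℤ) := {(1, 0), (-1, 0), (0, 1), (0, -1)} with hNdef
  have hgb : ∀ z, |g z| ≤ 1 / c := by
    intro z
    by_cases hz : z = 0
    · simp [hg, hz, ha0, hc.le]
    · have h1 := hapos z hz
      simp only [hg]
      rw [abs_of_pos (by positivity)]
      exact one_div_le_one_div_of_le hc (hca z hz)
  set E : ℕ → Set Ω := fun n => {ω | ∀ k ≤ n, S k ω ∉ N} with hE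
  set M : ℕ → Ω → ℝ := fun n ω => 1 / a (S ((min (n : ℕ∞) (τ ω)).toNat) ω) with hM
  set D : ℕ → Ω → ℝ := fun n ω => g (S (n + 1) ω) - g (S n ω) with hD
  have hMb : ∀ n ω, |M n ω| ≤ 1 / c := fun n ω => hgb _
  have hM0 : M 0 = fun ω => g (S 0 ω) := by
    funext ω; simp [hM, hg]
  have hMs : ∀ n, M (n + 1) = M n + (E n).indicator (D n) := by
    intro n
    funext ω
    by_cases hω : ω ∈ E n
    · have hle : ((n + 1 : ℕ) : ℕ∞) ≤ τ ω := by
        rw [hτ]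
        apply le_sInf
        rintro k ⟨m, rfl, hm⟩
        have : ¬ m ≤ n := fun h => hω m h hm
        exact_mod_cast (by omega : n + 1 ≤ m)
      have hle' : (n : ℕ∞) ≤ τ ω := le_trans (by exact_mod_cast Nat.le_succ n) hle
      simp only [hM, Pi.add_apply, Set.indicator_of_mem hω, hD, hg]
      rw [min_eq_left hle, min_eq_left hle', ENat.toNat_coe, ENat.toNat_coe]
      ring
    · have hle : τ ω ≤ (n : ℕ∞) := by
        simp only [hE, Set.mem_setOf_eq] at hω
        push Not at hω
        obtain ⟨k, hk, hkN⟩ := hω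
        rw [hτ]
        exact le_trans (sInf_le ⟨k, rfl, hkN⟩) (by exact_mod_cast hk)
      have hle' : τ ω ≤ ((n + 1 : ℕ) : ℕ∞) := le_trans hle (by exact_mod_cast Nat.le_succ n)
      simp only [hM, Pi.add_apply, Set.indicator_of_notMem hω]
      rw [min_eq_right hle, min_eq_right hle', add_zero]
  have hgS : ∀ n, Measurable[ℱ n] (fun ω => g (S n ω)) := fun n =>
    (measurable_of_countable g).comp (hadapted n)
  have hEm : ∀ n, MeasurableSet[ℱ n] (E n) := by
    intro n
    have : E n = ⋂ k ∈ Set.Iic n, (S k) ⁻¹' Nᶜ := by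
      ext ω; simp [hE]
    rw [this]
    refine MeasurableSet.biInter (Set.to_countable _) fun k hk => ?_
    exact ℱ.mono hk _ (hadapted k (Set.to_countable _).measurableSet)
  have hDm : ∀ n, Measurable[ℱ (n + 1)] (D n) := fun n =>
    (hgS (n + 1)).sub ((hgS n).mono (ℱ.mono n.le_succ) le_rfl)
  have hMm : ∀ n, Measurable[ℱ n] (M n) := by
    intro n
    induction n with
    | zero => rw [hM0]; exact hgS 0
    | succ n ih =>
      rw [hMs]
      exact (ih.mono (ℱ.mono n.le_succ) le_rfl).add
        ((hDm n).indicator (ℱ.mono n.le_succ _ (hEm n)))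
  have hMi : ∀ n, Integrable (M n) μ := fun n =>
    Integrable.of_bound ((hMm n).mono (ℱ.le n) le_rfl).aestronglyMeasurable (1 / c)
      (ae_of_all _ fun ω => hMb n ω)
  have hgi : ∀ n, Integrable (fun ω => g (S n ω)) μ := fun n =>
    Integrable.of_bound ((hgS n).mono (ℱ.le n) le_rfl).aestronglyMeasurable (1 / c)
      (ae_of_all _ fun ω => hgb _)
  have hDi : ∀ n, Integrable (D n) μ := fun n => (hgi (n + 1)).sub (hgi n)
  refine martingale_nat (fun n => (hMm n).stronglyMeasurable) hMi fun n => ?_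
  have h1 : μ[M (n + 1) | ℱ n] =ᵐ[μ] μ[M n | ℱ n] + μ[(E n).indicator (D n) | ℱ n] := by
    rw [hMs]
    exact condExp_add (hMi n) ((hDi n).indicator (ℱ.le n _ (hEm n))) _
  have h2 : μ[M n | ℱ n] = M n :=
    condExp_of_stronglyMeasurable (ℱ.le n) (hMm n).stronglyMeasurable (hMi n)
  have h3 : μ[(E n).indicator (D n) | ℱ n] =ᵐ[μ] (E n).indicator (μ[D n | ℱ n]) :=
    condExp_indicator (hDi n) (hEm n)
  have h4 : μ[D n | ℱ n] =ᵐ[μ]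
      μ[(fun ω => g (S (n + 1) ω)) | ℱ n] - μ[(fun ω => g (S n ω)) | ℱ n] :=
    condExp_sub (hgi (n + 1)) (hgi n) _
  have h5 : μ[(fun ω => g (S n ω)) | ℱ n] = fun ω => g (S n ω) :=
    condExp_of_stronglyMeasurable (ℱ.le n) (hgS n).stronglyMeasurable (hgi n)
  have h6 := hstep n g ⟨1 / c, hgb⟩
  filter_upwards [h1, h3, h4, h6] with ω e1 e3 e4 e6
  change M n ω = _
  rw [e1, Pi.add_apply, h2, e3]
  by_cases hω : ω ∈ E n
  · rw [Set.indicator_of_mem hω, e4, Pi.sub_apply, h5, e6]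
    have := step_value a hapos (S n ω) (hS0 n ω) (hω n le_rfl)
    simp only [hg]
    rw [this]
    ring
  · rw [Set.indicator_of_notMem hω, add_zero]
end

section
/- Let d ≥ 3, let x ∈ ∂B(n), and let k > 1. Then as n → ∞, P_x[τ₁(∂B(n+k)) < τ₁(B(n))] = cap(B(n)) hm_{B(n)}(x) / (1 − (1 + k/n)^{−(d−2)} + O(n^{−1})), where the O(n^{−1}) term depends on n only (uniformly in k). -/
open MeasureTheory Real
open scoped Classical ENNReal

/-- Points of `ℤ^d`. -/
abbrev ZV (d : ℕ) := Fin d → ℤ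

/-- Euclidean norm on `ℤ^d`. -/
noncomputable def znorm {d : ℕ} (x : ZV d) : ℝ := Real.sqrt (∑ j, ((x j : ℝ)) ^ 2)

/-- Nearest-neighbor adjacency on `ℤ^d`. -/
def zadj {d : ℕ} (x y : ZV d) : Prop := (∑ j, |x j - y j|) = 1

/-- The closed Euclidean ball `B(r)` in `ℤ^d`, centered at the origin. -/
def zball (d : ℕ) (r : ℝ) : Set (ZV d) := {y | znorm y ≤ r}

/-- The internal boundary `∂A` of a set `A ⊆ ℤ^d`. -/
def ibdry {d : ℕ} (A : Set (ZV d)) : Set (ZV d) := {x | x ∈ A ∧ ∃ y, y ∉ A ∧ zadj x y}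

/-- `P x` is the law (on path space) of simple random walk on `ℤ^d` started at `x`,
characterized by its prefix probabilities. -/
def IsSRW (d : ℕ) (P : ZV d → Measure (ℕ → ZV d)) : Prop :=
  ∀ (x : ZV d) (n : ℕ) (f : ℕ → ZV d),
    P x {ω | ∀ i ≤ n, ω i = f i} =
      if f 0 = x ∧ ∀ i < n, zadj (f i) (f (i + 1)) then (1 / (2 * d) : ℝ≥0∞) ^ n else 0

/-- The hitting time `τ₁(A) = inf{k ≥ 1 : ω_k ∈ A}` (with value `⊤` if the set
is never hit), valued in `ℕ∞`. -/
noncomputable def hitT {d : ℕ} (A : Set (ZV d)) (ω : ℕ → ZV d) : ℕ∞ :=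
  sInf {k : ℕ∞ | ∃ n : ℕ, k = n ∧ 1 ≤ n ∧ ω n ∈ A}

/-- Escape probability `Es_A(x) = P_x[τ₁(A) = ∞]` for simple random walk (`d ≥ 3`). -/
noncomputable def escProb {d : ℕ} (P : ZV d → Measure (ℕ → ZV d))
    (A : Set (ZV d)) (x : ZV d) : ℝ :=
  (P x {ω | ∀ j : ℕ, 1 ≤ j → ω j ∉ A}).toReal

/-- Capacity `cap(A) = Σ_{x ∈ A} Es_A(x)` for simple random walk (`d ≥ 3`). -/
noncomputable def capac {d : ℕ} (P : ZV d → Measure (ℕ → ZV d)) (A : Set (ZV d)) : ℝ :=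
  ∑' y : A, escProb P A y

/-- Harmonic measure `hm_A(x) = Es_A(x)/cap(A)`. -/
noncomputable def harmMeas {d : ℕ} (P : ZV d → Measure (ℕ → ZV d))
    (A : Set (ZV d)) (x : ZV d) : ℝ :=
  escProb P A x / capac P A

/-! ### Steps, shift, Markov property -/

/-- The `2d` unit steps. -/
def st {d : ℕ} (i : Fin d × Bool) : ZV d := Pi.single i.1 (if i.2 then 1 else -1)

lemma st_inj {d : ℕ} : Function.Injective (st (d := d)) := by
  rintro ⟨i, a⟩ ⟨j, b⟩ h
  have h1 := congrFun h i
  have h2 := congrFun h j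
  by_cases hij : i = j
  · subst hij
    cases a <;> cases b <;> simp_all [st]
  · simp only [st, Pi.single_eq_same] at h1
    rw [Pi.single_eq_of_ne hij] at h1
    cases a <;> simp at h1

lemma zadj_iff {d : ℕ} (x y : ZV d) : zadj x y ↔ ∃ i, x + st i = y := by
  constructor
  · intro h
    unfold zadj at h
    have : ∃ j, x j - y j ≠ 0 := by
      by_contra! hc
      simp [hc] at h
    obtain ⟨j, hj⟩ := this
    have h1 : 1 ≤ |x j - y j| := Int.one_le_abs hj
    rw [← Finset.add_sum_erase _ _ (Finset.mem_univ j)] at h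
    have h0 : ∀ i ∈ Finset.univ.erase j, 0 ≤ |x i - y i| := fun i _ => abs_nonneg _
    have h2 := Finset.sum_nonneg h0
    have h3 : ∑ i ∈ Finset.univ.erase j, |x i - y i| = 0 := by omega
    have h4 : |x j - y j| = 1 := by omega
    rw [Finset.sum_eq_zero_iff_of_nonneg h0] at h3
    refine ⟨(j, decide (x j - y j = -1)), ?_⟩
    ext i
    by_cases hi : i = j
    · subst hi
      simp only [st, Pi.add_apply, Pi.single_eq_same]
      rcases (abs_eq (by norm_num : (0:ℤ) ≤ 1)).1 h4 with h5 | h5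
      · simp [h5]; omega
      · simp [h5]; omega
    · have := h3 i (by simp [hi])
      rw [abs_eq_zero] at this
      simp only [st, Pi.add_apply]
      rw [Pi.single_eq_of_ne hi]
      omega
  · rintro ⟨i, rfl⟩
    unfold zadj
    rw [Finset.sum_eq_single i.1]
    · simp only [st, Pi.add_apply, Pi.single_eq_same]
      split_ifs <;> simp
    · intro j _ hj
      simp only [st, Pi.add_apply]
      rw [Pi.single_eq_of_ne hj]; simp
    · simp

/-- Time shift. -/
def shf {d : ℕ} (ω : ℕ → ZV d) : ℕ → ZV d := fun n => ω (n + 1)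

lemma measurable_shf {d : ℕ} : Measurable (shf (d := d)) := by
  unfold shf
  fun_prop

/-- Cylinders. -/
def cyl {d : ℕ} (n : ℕ) (f : ℕ → ZV d) : Set (ℕ → ZV d) := {ω | ∀ i ≤ n, ω i = f i}

lemma measurableSet_cyl {d : ℕ} (n : ℕ) (f : ℕ → ZV d) : MeasurableSet (cyl n f) := by
  have : cyl n f = ⋂ i : ℕ, ⋂ _ : i ≤ n, (fun ω : ℕ → ZV d => ω i) ⁻¹' {f i} := by
    ext; simp [cyl]
  rw [this]
  exact MeasurableSet.iInter fun i => MeasurableSet.iInter fun _ =>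
    measurable_pi_apply i (measurableSet_singleton _)

lemma cyl_pi {d : ℕ} : IsPiSystem {s : Set (ℕ → ZV d) | ∃ n f, s = cyl n f} := by
  rintro _ ⟨n, f, rfl⟩ _ ⟨m, g, rfl⟩ ⟨ω, h1, h2⟩
  refine ⟨max n m, ω, ?_⟩
  ext η
  simp only [cyl, Set.mem_inter_iff, Set.mem_ofPred_eq] at *
  constructor
  · rintro ⟨h3, h4⟩ i hi
    rcases le_max_iff.1 hi with hi | hi
    · rw [h3 i hi, h1 i hi]
    · rw [h4 i hi, h2 i hi]
  · intro h
    exact ⟨fun i hi => by rw [h i (le_max_of_le_left hi), h1 i hi],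
      fun i hi => by rw [h i (le_max_of_le_right hi), h2 i hi]⟩

lemma cyl_gen {d : ℕ} : (MeasurableSpace.pi : MeasurableSpace (ℕ → ZV d)) =
    MeasurableSpace.generateFrom {s : Set (ℕ → ZV d) | ∃ n f, s = cyl n f} := by
  apply le_antisymm
  · refine iSup_le fun i => ?_
    rintro _ ⟨s, _, rfl⟩
    have : (fun ω : ℕ → ZV d => ω i) ⁻¹' s =
        ⋃ g : {g : Fin (i+1) → ZV d // g (Fin.last i) ∈ s},
          cyl i (fun j => if h : j < i + 1 then g.1 ⟨j, h⟩ else 0) := by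
      ext ω
      simp only [Set.mem_preimage, Set.mem_iUnion, cyl, Set.mem_ofPred_eq]
      constructor
      · intro h
        refine ⟨⟨fun j => ω j, by simpa using h⟩, ?_⟩
        intro j hj
        simp [Nat.lt_succ_of_le hj]
      · rintro ⟨g, hg⟩
        rw [hg i le_rfl]
        have := g.2
        simpa [Fin.last] using this
    rw [this]
    exact MeasurableSet.iUnion fun g => MeasurableSpace.measurableSet_generateFrom ⟨_, _, rfl⟩
  · apply MeasurableSpace.generateFrom_le
    rintro _ ⟨n, f, rfl⟩
    exact measurableSet_cyl n f

lemma start_eq {d : ℕ} (P : ZV d → Measure (ℕ → ZV d)) [∀ x, IsProbabilityMeasure (P x)]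
    (hP : IsSRW d P) (x : ZV d) : ∀ᵐ ω ∂(P x), ω 0 = x := by
  have h := hP x 0 (fun _ => x)
  simp at h
  have hm : MeasurableSet ((fun ω : ℕ → ZV d => ω 0) ⁻¹' {x}) :=
    (measurableSet_singleton x).preimage (measurable_pi_apply 0)
  exact (prob_compl_eq_zero_iff hm).2 h

lemma markov_measure {d : ℕ} (hd : 0 < d) (P : ZV d → Measure (ℕ → ZV d))
    [∀ x, IsProbabilityMeasure (P x)] (hP : IsSRW d P) (x : ZV d) :
    (P x).map shf = (1 / (2 * d) : ℝ≥0∞) • ∑ i, P (x + st i) := by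
  have : IsProbabilityMeasure ((P x).map shf) :=
    Measure.isProbabilityMeasure_map measurable_shf.aemeasurable
  refine MeasureTheory.ext_of_generate_finite _ cyl_gen cyl_pi ?_ ?_
  · rintro _ ⟨n, f, rfl⟩
    rw [Measure.map_apply measurable_shf (measurableSet_cyl n f)]
    have h1 : P x (shf ⁻¹' cyl n f) =
        P x {ω | ∀ i ≤ n + 1, ω i = (fun j => Nat.casesOn j x (fun j => f j) : ℕ → ZV d) i} := by
      apply measure_congr
      filter_upwards [start_eq P hP x] with ω hω
      apply propext
      change (∀ i ≤ n, ω (i+1) = f i) ↔ _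
      constructor
      · intro h i hi
        cases i with
        | zero => exact hω
        | succ i => exact h i (by omega)
      · intro h i hi
        exact h (i+1) (by omega)
    rw [h1, hP]
    simp only [Measure.smul_apply, Measure.coe_finsetSum, Finset.sum_apply, smul_eq_mul]
    have h2 : ∀ i, P (x + st i) (cyl n f) = if x + st i = f 0 then
        (if ∀ i < n, zadj (f i) (f (i + 1)) then (1 / (2 * d) : ℝ≥0∞) ^ n else 0) else 0 := by
      intro i
      rw [cyl, hP, ite_and]
      simp only [eq_comm]
    simp only [h2]
    by_cases hz : zadj x (f 0)
    · obtain ⟨i, hi⟩ := (zadj_iff _ _).1 hz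
      rw [Finset.sum_eq_single i]
      · rw [if_pos hi, pow_succ']
        have : (∀ i < n + 1, zadj ((fun j => Nat.casesOn j x (fun j => f j) : ℕ → ZV d) i)
          ((fun j => Nat.casesOn j x (fun j => f j) : ℕ → ZV d) (i + 1))) ↔
            ∀ i < n, zadj (f i) (f (i + 1)) := by
          constructor
          · intro h i hi
            exact h (i+1) (by omega)
          · intro h i hi
            cases i with
            | zero => exact hz
            | succ i => exact h i (by omega)
        simp only [this]
        simp
      · intro j _ hj
        rw [if_neg]
        intro h
        exact hj (st_inj (add_left_cancel (h.trans hi.symm)))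
      · simp
    · rw [if_neg, Finset.sum_eq_zero, mul_zero]
      · intro i _
        rw [if_neg]
        intro h
        exact hz ((zadj_iff _ _).2 ⟨i, h⟩)
      · rintro ⟨_, h⟩
        exact hz (h 0 (by omega))
  · simp
    rw [mul_comm (2:ℝ≥0∞), ENNReal.inv_mul_cancel]
    · simp; omega
    · exact ENNReal.mul_ne_top (by simp) (by simp)

/-- The averaging operator of simple random walk. -/
noncomputable def av {d : ℕ} (f : ZV d → ℝ) (x : ZV d) : ℝ := (∑ i, f (x + st i)) / (2 * d)

lemma markov {d : ℕ} (hd : 0 < d) (P : ZV d → Measure (ℕ → ZV d))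
    [∀ x, IsProbabilityMeasure (P x)] (hP : IsSRW d P) (x : ZV d)
    {E : Set (ℕ → ZV d)} (hE : MeasurableSet E) :
    (P x).real (shf ⁻¹' E) = av (fun y => (P y).real E) x := by
  have h := congrArg (fun μ : Measure (ℕ → ZV d) => (μ E).toReal) (markov_measure hd P hP x)
  simp only [Measure.map_apply measurable_shf hE, Measure.smul_apply, Measure.coe_finsetSum,
    Finset.sum_apply, smul_eq_mul, ENNReal.toReal_mul] at h
  rw [ENNReal.toReal_sum (fun i _ => measure_ne_top _ _)] at h
  rw [Measure.real, h, av]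
  simp [Measure.real]
  ring

lemma av_mono {d : ℕ} {f g : ZV d → ℝ} {x : ZV d} (h : ∀ i, f (x + st i) ≤ g (x + st i)) :
    av f x ≤ av g x := by
  unfold av
  gcongr with i
  exact h i

lemma av_const {d : ℕ} (hd : 0 < d) (c : ℝ) (x : ZV d) : av (fun _ => c) x = c := by
  unfold av
  simp
  field_simp

lemma av_sub {d : ℕ} (f g : ZV d → ℝ) (x : ZV d) :
    av (fun y => f y - g y) x = av f x - av g x := by
  unfold av
  rw [Finset.sum_sub_distrib]; ring

lemma av_mul {d : ℕ} (c : ℝ) (f : ZV d → ℝ) (x : ZV d) :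
    av (fun y => c * f y) x = c * av f x := by
  unfold av
  rw [← Finset.mul_sum]; ring

/-- Maximum principle on finite sets. -/
lemma max_principle {d : ℕ} (hd : 0 < d) (W : Set (ZV d)) (hW : W.Finite) (g : ZV d → ℝ) (δ : ℝ)
    (hsub : ∀ x ∈ W, g x ≤ av g x)
    (hb : ∀ x ∈ W, ∀ i, x + st i ∉ W → g (x + st i) ≤ δ) : ∀ x ∈ W, g x ≤ δ := by
  by_contra! hc
  obtain ⟨x0, hx0, hgx0⟩ := hc
  obtain ⟨x1, hx1, hmax⟩ := hW.exists_maximalFor g W ⟨x0, hx0⟩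
  have hmax : ∀ y ∈ W, g y ≤ g x1 := fun y hy => by
    rcases le_total (g y) (g x1) with h | h
    · exact h
    · exact hmax hy h
  have hM : δ < g x1 := lt_of_lt_of_le hgx0 (hmax _ hx0)
  have hfin : {y ∈ W | g y = g x1}.Finite := hW.subset (Set.sep_subset _ _)
  let j0 : Fin d := ⟨0, hd⟩
  obtain ⟨z, ⟨hz, hgz⟩, hzm⟩ := hfin.exists_maximalFor (fun y : ZV d => y j0) _ ⟨x1, hx1, rfl⟩
  have hle : ∀ i, g (z + st i) ≤ g x1 := by
    intro i
    by_cases h : z + st i ∈ W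
    · exact hmax _ h
    · exact (hb z hz i h).trans hM.le
  have hlt : av g z < g x1 ∨ g (z + st (j0, true)) = g x1 := by
    rcases (hle (j0, true)).lt_or_eq with h | h
    · left
      have : ∑ i, g (z + st i) < ∑ i : Fin d × Bool, g x1 :=
        Finset.sum_lt_sum (fun i _ => hle i) ⟨_, Finset.mem_univ _, h⟩
      have h2 := av_const hd (g x1) z
      rw [← h2]
      unfold av
      have : (0:ℝ) < d := by exact_mod_cast hd
      gcongr
    · exact Or.inr h
  rcases hlt with h | h
  · have := hsub z hz
    linarith
  · have hin : z + st (j0, true) ∈ W := by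
      by_contra hn
      have := hb z hz _ hn
      linarith
    have := hzm (j := z + st (j0, true)) ⟨hin, h⟩ (by simp [st])
    simp [st] at this

/-! ### Hitting probabilities -/

lemma measurableSet_at {d : ℕ} (m : ℕ) (A : Set (ZV d)) :
    MeasurableSet {ω : ℕ → ZV d | ω m ∈ A} :=
  (A.to_countable.measurableSet).preimage (measurable_pi_apply m)

/-- The event of hitting `A` by time `T` (time `0` included). -/
def hitBy {d : ℕ} (A : Set (ZV d)) (T : ℕ) : Set (ℕ → ZV d) := {ω | ∃ m ≤ T, ω m ∈ A}

/-- The event of hitting `A` (time `0` included). -/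
def hitEv {d : ℕ} (A : Set (ZV d)) : Set (ℕ → ZV d) := {ω | ∃ m, ω m ∈ A}

/-- The event of hitting `D` before `A` (time `0` included). -/
def befEv {d : ℕ} (A D : Set (ZV d)) : Set (ℕ → ZV d) :=
  {ω | ∃ m, ω m ∈ D ∧ ∀ j ≤ m, ω j ∉ A}

lemma measurableSet_hitBy {d : ℕ} (A : Set (ZV d)) (T : ℕ) : MeasurableSet (hitBy A T) := by
  have : hitBy A T = ⋃ m : ℕ, ⋃ _ : m ≤ T, {ω : ℕ → ZV d | ω m ∈ A} := by
    ext; simp [hitBy]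
  rw [this]
  exact MeasurableSet.iUnion fun m => MeasurableSet.iUnion fun _ => measurableSet_at m A

lemma hitEv_eq {d : ℕ} (A : Set (ZV d)) : hitEv A = ⋃ T, hitBy A T := by
  ext ω
  simp only [hitEv, hitBy, Set.mem_ofPred_eq, Set.mem_iUnion]
  exact ⟨fun ⟨m, h⟩ => ⟨m, m, le_rfl, h⟩, fun ⟨_, m, _, h⟩ => ⟨m, h⟩⟩

lemma measurableSet_hitEv {d : ℕ} (A : Set (ZV d)) : MeasurableSet (hitEv A) := by
  rw [hitEv_eq]
  exact MeasurableSet.iUnion fun T => measurableSet_hitBy A T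

lemma measurableSet_befEv {d : ℕ} (A D : Set (ZV d)) : MeasurableSet (befEv A D) := by
  have : befEv A D = ⋃ m : ℕ, ({ω : ℕ → ZV d | ω m ∈ D} ∩
      ⋂ j : ℕ, ⋂ _ : j ≤ m, {ω : ℕ → ZV d | ω j ∈ A}ᶜ) := by
    ext; simp [befEv]
  rw [this]
  exact MeasurableSet.iUnion fun m => (measurableSet_at m D).inter
    (MeasurableSet.iInter fun j => MeasurableSet.iInter fun _ => (measurableSet_at j A).compl)


lemma real_congr_start {d : ℕ} (P : ZV d → Measure (ℕ → ZV d))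
    [∀ x, IsProbabilityMeasure (P x)] (hP : IsSRW d P) (x : ZV d) {E F : Set (ℕ → ZV d)}
    (h : ∀ ω : ℕ → ZV d, ω 0 = x → (ω ∈ E ↔ ω ∈ F)) : (P x).real E = (P x).real F := by
  apply measureReal_congr
  filter_upwards [start_eq P hP x] with ω hω
  exact propext (h ω hω)

lemma hit_one {d : ℕ} (P : ZV d → Measure (ℕ → ZV d))
    [∀ x, IsProbabilityMeasure (P x)] (hP : IsSRW d P) (A : Set (ZV d)) (x : ZV d) (hx : x ∈ A) :
    (P x).real (hitEv A) = 1 := by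
  rw [real_congr_start P hP x (F := Set.univ)]
  · simp
  · intro ω h
    simp only [hitEv, Set.mem_ofPred_eq, Set.mem_univ, iff_true]
    exact ⟨0, h ▸ hx⟩

lemma hit_harm {d : ℕ} (hd : 0 < d) (P : ZV d → Measure (ℕ → ZV d))
    [∀ x, IsProbabilityMeasure (P x)] (hP : IsSRW d P) (A : Set (ZV d)) (x : ZV d) (hx : x ∉ A) :
    (P x).real (hitEv A) = av (fun y => (P y).real (hitEv A)) x := by
  rw [← markov hd P hP x (measurableSet_hitEv A)]
  apply real_congr_start P hP x
  intro ω h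
  change (∃ m, ω m ∈ A) ↔ (∃ m, ω (m+1) ∈ A)
  constructor
  · rintro ⟨m, hm⟩
    cases m with
    | zero => exact absurd (h ▸ hm) hx
    | succ m => exact ⟨m, hm⟩
  · rintro ⟨m, hm⟩
    exact ⟨_, hm⟩

lemma hitBy_succ {d : ℕ} (hd : 0 < d) (P : ZV d → Measure (ℕ → ZV d))
    [∀ x, IsProbabilityMeasure (P x)] (hP : IsSRW d P) (A : Set (ZV d)) (T : ℕ) (x : ZV d)
    (hx : x ∉ A) :
    (P x).real (hitBy A (T + 1)) = av (fun y => (P y).real (hitBy A T)) x := by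
  rw [← markov hd P hP x (measurableSet_hitBy A T)]
  apply real_congr_start P hP x
  intro ω h
  change (∃ m ≤ T + 1, ω m ∈ A) ↔ (∃ m ≤ T, ω (m+1) ∈ A)
  constructor
  · rintro ⟨m, hmT, hm⟩
    cases m with
    | zero => exact absurd (h ▸ hm) hx
    | succ m => exact ⟨m, by omega, hm⟩
  · rintro ⟨m, hmT, hm⟩
    exact ⟨_, by omega, hm⟩

lemma hitBy_zero {d : ℕ} (P : ZV d → Measure (ℕ → ZV d))
    [∀ x, IsProbabilityMeasure (P x)] (hP : IsSRW d P) (A : Set (ZV d)) (x : ZV d)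
    (hx : x ∉ A) : (P x).real (hitBy A 0) = 0 := by
  rw [real_congr_start P hP x (F := ∅)]
  · simp
  · intro ω h
    simp [hitBy, h, hx]

lemma hit_upper {d : ℕ} (hd : 0 < d) (P : ZV d → Measure (ℕ → ZV d))
    [∀ x, IsProbabilityMeasure (P x)] (hP : IsSRW d P) (A : Set (ZV d)) (F : ZV d → ℝ)
    (h0 : ∀ x ∉ A, 0 ≤ F x) (hs : ∀ x ∉ A, av F x ≤ F x)
    (hb : ∀ x ∉ A, ∀ i, x + st i ∈ A → 1 ≤ F (x + st i)) :
    ∀ x ∉ A, (P x).real (hitEv A) ≤ F x := by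
  have key : ∀ T, ∀ x ∉ A, (P x).real (hitBy A T) ≤ F x := by
    intro T
    induction T with
    | zero =>
      intro x hx
      rw [hitBy_zero P hP A x hx]
      exact h0 x hx
    | succ T ih =>
      intro x hx
      rw [hitBy_succ hd P hP A T x hx]
      refine (av_mono fun i => ?_).trans (hs x hx)
      by_cases h : x + st i ∈ A
      · exact measureReal_le_one.trans (hb x hx i h)
      · exact ih _ h
  intro x hx
  have hmono : Monotone (hitBy A) := fun S T hST ω ⟨m, hm, h⟩ => ⟨m, hm.trans hST, h⟩
  have ht := tendsto_measure_iUnion_atTop (μ := P x) hmono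
  rw [← hitEv_eq] at ht
  have ht2 := (ENNReal.tendsto_toReal (measure_ne_top (P x) (hitEv A))).comp ht
  exact le_of_tendsto' ht2 (fun T => key T x hx)

lemma hit_lower {d : ℕ} (hd : 0 < d) (P : ZV d → Measure (ℕ → ZV d))
    [∀ x, IsProbabilityMeasure (P x)] (hP : IsSRW d P) (A : Set (ZV d)) (F : ZV d → ℝ)
    (hs : ∀ x ∉ A, F x ≤ av F x)
    (hb : ∀ x ∉ A, ∀ i, x + st i ∈ A → F (x + st i) ≤ 1)
    (hinf : ∀ δ > 0, {x | δ < F x}.Finite) :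
    ∀ x ∉ A, F x ≤ (P x).real (hitEv A) := by
  intro x hx
  refine le_of_forall_pos_le_add fun δ hδ => ?_
  by_cases hxδ : δ < F x
  · have := max_principle hd ({x | δ < F x} \ A) ((hinf δ hδ).subset Set.sdiff_subset)
      (fun y => F y - (P y).real (hitEv A)) δ ?_ ?_ x ⟨hxδ, hx⟩
    · linarith
    · rintro y ⟨_, hy⟩
      rw [av_sub, ← hit_harm hd P hP A y hy]
      have := hs y hy
      linarith
    · rintro y ⟨_, hy⟩ i hi
      by_cases hA : y + st i ∈ A
      · rw [hit_one P hP A _ hA]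
        have := hb y hy i hA
        linarith
      · have h1 : F (y + st i) ≤ δ := by
          by_contra! hc
          exact hi ⟨hc, hA⟩
        have h2 : 0 ≤ (P (y + st i)).real (hitEv A) := measureReal_nonneg
        linarith
  · have h2 : 0 ≤ (P x).real (hitEv A) := measureReal_nonneg
    linarith

lemma bef_zero {d : ℕ} (P : ZV d → Measure (ℕ → ZV d))
    [∀ x, IsProbabilityMeasure (P x)] (hP : IsSRW d P) (A D : Set (ZV d)) (x : ZV d)
    (hx : x ∈ A) : (P x).real (befEv A D) = 0 := by
  rw [real_congr_start P hP x (F := ∅)]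
  · simp
  · intro ω h
    simp only [Set.mem_empty_iff_false, iff_false]
    rintro ⟨m, _, hm⟩
    exact hm 0 (Nat.zero_le _) (h ▸ hx)

lemma bef_one {d : ℕ} (P : ZV d → Measure (ℕ → ZV d))
    [∀ x, IsProbabilityMeasure (P x)] (hP : IsSRW d P) (A D : Set (ZV d)) (x : ZV d)
    (hxA : x ∉ A) (hxD : x ∈ D) : (P x).real (befEv A D) = 1 := by
  rw [real_congr_start P hP x (F := Set.univ)]
  · simp
  · intro ω h
    simp only [Set.mem_univ, iff_true]
    refine ⟨0, h ▸ hxD, fun j hj => ?_⟩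
    obtain rfl : j = 0 := by omega
    exact h ▸ hxA

lemma bef_harm {d : ℕ} (hd : 0 < d) (P : ZV d → Measure (ℕ → ZV d))
    [∀ x, IsProbabilityMeasure (P x)] (hP : IsSRW d P) (A D : Set (ZV d)) (x : ZV d)
    (hxA : x ∉ A) (hxD : x ∉ D) :
    (P x).real (befEv A D) = av (fun y => (P y).real (befEv A D)) x := by
  rw [← markov hd P hP x (measurableSet_befEv A D)]
  apply real_congr_start P hP x
  intro ω h
  change (∃ m, ω m ∈ D ∧ ∀ j ≤ m, ω j ∉ A) ↔ (∃ m, ω (m+1) ∈ D ∧ ∀ j ≤ m, ω (j+1) ∉ A)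
  constructor
  · rintro ⟨m, hm, hj⟩
    cases m with
    | zero => exact absurd (h ▸ hm) hxD
    | succ m => exact ⟨m, hm, fun j hjm => hj _ (by omega)⟩
  · rintro ⟨m, hm, hj⟩
    refine ⟨_, hm, fun j hjm => ?_⟩
    cases j with
    | zero => exact h ▸ hxA
    | succ j => exact hj j (by omega)

lemma hitT_event {d : ℕ} (A D : Set (ZV d)) :
    {ω | hitT D ω < hitT A ω} = shf ⁻¹' befEv A D := by
  ext ω
  change hitT D ω < hitT A ω ↔ (∃ m, ω (m+1) ∈ D ∧ ∀ j ≤ m, ω (j+1) ∉ A)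
  unfold hitT
  rw [sInf_lt_iff]
  constructor
  · rintro ⟨_, ⟨m, rfl, hm, hD⟩, hlt⟩
    refine ⟨m - 1, by rwa [Nat.sub_add_cancel hm], fun j hj hA => ?_⟩
    have h1 : sInf {k : ℕ∞ | ∃ n : ℕ, k = n ∧ 1 ≤ n ∧ ω n ∈ A} ≤ ((j + 1 : ℕ) : ℕ∞) :=
      sInf_le ⟨j + 1, rfl, by omega, hA⟩
    have h2 : (((j + 1 : ℕ) : ℕ∞)) ≤ (m : ℕ∞) := by exact_mod_cast (by omega : j + 1 ≤ m)
    exact absurd (h1.trans h2) (not_le.2 hlt)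
  · rintro ⟨m, hD, hA⟩
    refine ⟨((m + 1 : ℕ) : ℕ∞), ⟨m + 1, rfl, by omega, hD⟩, ?_⟩
    refine lt_of_lt_of_le (b := ((m + 2 : ℕ) : ℕ∞)) (by exact_mod_cast (by omega : m+1 < m+2)) ?_
    apply le_sInf
    rintro _ ⟨j, rfl, hj, hjA⟩
    have : m + 2 ≤ j := by
      by_contra! hc
      exact hA (j - 1) (by omega) (by rwa [Nat.sub_add_cancel hj])
    exact_mod_cast this

lemma esc_event {d : ℕ} (A : Set (ZV d)) :
    {ω : ℕ → ZV d | ∀ j : ℕ, 1 ≤ j → ω j ∉ A} = shf ⁻¹' (hitEv A)ᶜ := by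
  ext ω
  change (∀ j : ℕ, 1 ≤ j → ω j ∉ A) ↔ ¬ (∃ m, ω (m+1) ∈ A)
  push Not
  constructor
  · intro h m
    exact h _ (by omega)
  · intro h j hj
    have := h (j-1)
    rwa [Nat.sub_add_cancel hj] at this

/-- Comparison of the escape probability with the probability of reaching the outer boundary. -/
lemma compare_esc {d : ℕ} (hd : 0 < d) (P : ZV d → Measure (ℕ → ZV d))
    [∀ x, IsProbabilityMeasure (P x)] (hP : IsSRW d P) (A B : Set (ZV d)) (hB : B.Finite)
    (lo hi : ℝ)
    (hlo : ∀ y ∈ ibdry B, lo ≤ 1 - (P y).real (hitEv A))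
    (hhi : ∀ y ∈ ibdry B, 1 - (P y).real (hitEv A) ≤ hi)
    (x : ZV d) (hx : ∀ i, x + st i ∈ B) :
    lo * (P x {ω | hitT (ibdry B) ω < hitT A ω}).toReal ≤ escProb P A x ∧
    escProb P A x ≤ hi * (P x {ω | hitT (ibdry B) ω < hitT A ω}).toReal := by
  set D := ibdry B with hD
  have hstep : ∀ y ∈ B, y ∉ D → ∀ i, y + st i ∈ B := by
    intro y hy hyD i
    by_contra hc
    exact hyD ⟨hy, _, hc, (zadj_iff _ _).2 ⟨i, rfl⟩⟩
  have hcompl : ∀ y, (P y).real (hitEv A)ᶜ = 1 - (P y).real (hitEv A) := fun y =>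
    probReal_compl_eq_one_sub (measurableSet_hitEv A)
  have hu : ∀ y ∉ A, 1 - (P y).real (hitEv A) = av (fun y => 1 - (P y).real (hitEv A)) y := by
    intro y hy
    rw [av_sub, av_const hd, ← hit_harm hd P hP A y hy]
  have hfin : (B \ (A ∪ D)).Finite := hB.subset Set.sdiff_subset
  have h1 : ∀ y ∈ B, lo * (P y).real (befEv A D) ≤ 1 - (P y).real (hitEv A) := by
    have hbd : ∀ y ∈ A ∪ D, lo * (P y).real (befEv A D) ≤ 1 - (P y).real (hitEv A) := by
      intro y hy
      by_cases hyA : y ∈ A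
      · rw [bef_zero P hP A D y hyA, hit_one P hP A y hyA]; simp
      · have hyD := hy.resolve_left hyA
        rw [bef_one P hP A D y hyA hyD, mul_one]
        exact hlo y hyD
    intro y hy
    by_cases hyW : y ∈ A ∪ D
    · exact hbd y hyW
    · have := max_principle hd (B \ (A ∪ D)) hfin
        (fun y => lo * (P y).real (befEv A D) - (1 - (P y).real (hitEv A))) 0 ?_ ?_ y ⟨hy, hyW⟩
      · linarith
      · rintro z ⟨hz, hzn⟩
        rw [Set.mem_union, not_or] at hzn
        rw [av_sub, av_mul, ← bef_harm hd P hP A D z hzn.1 hzn.2, ← hu z hzn.1]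
      · rintro z ⟨hz, hzn⟩ i hi
        rw [Set.mem_union, not_or] at hzn
        have : z + st i ∈ A ∪ D := by
          by_contra hc
          exact hi ⟨hstep z hz hzn.2 i, hc⟩
        have := hbd _ this
        linarith
  have h2 : ∀ y ∈ B, 1 - (P y).real (hitEv A) ≤ hi * (P y).real (befEv A D) := by
    have hbd : ∀ y ∈ A ∪ D, 1 - (P y).real (hitEv A) ≤ hi * (P y).real (befEv A D) := by
      intro y hy
      by_cases hyA : y ∈ A
      · rw [bef_zero P hP A D y hyA, hit_one P hP A y hyA]; simp
      · have hyD := hy.resolve_left hyA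
        rw [bef_one P hP A D y hyA hyD, mul_one]
        exact hhi y hyD
    intro y hy
    by_cases hyW : y ∈ A ∪ D
    · exact hbd y hyW
    · have := max_principle hd (B \ (A ∪ D)) hfin
        (fun y => (1 - (P y).real (hitEv A)) - hi * (P y).real (befEv A D)) 0 ?_ ?_ y ⟨hy, hyW⟩
      · linarith
      · rintro z ⟨hz, hzn⟩
        rw [Set.mem_union, not_or] at hzn
        rw [av_sub, av_mul, ← bef_harm hd P hP A D z hzn.1 hzn.2, ← hu z hzn.1]
      · rintro z ⟨hz, hzn⟩ i hi
        rw [Set.mem_union, not_or] at hzn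
        have : z + st i ∈ A ∪ D := by
          by_contra hc
          exact hi ⟨hstep z hz hzn.2 i, hc⟩
        have := hbd _ this
        linarith
  have e1 : (P x {ω | hitT D ω < hitT A ω}).toReal = av (fun y => (P y).real (befEv A D)) x := by
    rw [hitT_event, ← markov hd P hP x (measurableSet_befEv A D)]; rfl
  have e2 : escProb P A x = av (fun y => 1 - (P y).real (hitEv A)) x := by
    unfold escProb
    rw [esc_event]
    have := markov hd P hP x (measurableSet_hitEv A).compl
    simp only [hcompl] at this
    exact this
  rw [e1, e2, ← av_mul, ← av_mul]
  exact ⟨av_mono fun i => h1 _ (hx i), av_mono fun i => h2 _ (hx i)⟩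


lemma taylor2 (a : ℝ) : ∃ K > (0:ℝ), ∃ δ > (0:ℝ), δ < 1 ∧ ∀ w : ℝ, |w| ≤ δ →
    |(1 + w) ^ (-a) - (1 - a * w + a * (a + 1) / 2 * w ^ 2)| ≤ K * |w| ^ 3 := by
  have h := (Real.one_add_rpow_hasFPowerSeriesAt_zero (a := -a)).isBigO_sub_partialSum_pow 3
  obtain ⟨K, hK, h⟩ := h.exists_pos
  rw [Asymptotics.IsBigOWith] at h
  obtain ⟨δ, hδ, h⟩ := Metric.eventually_nhds_iff.1 h
  refine ⟨K, hK, min (δ/2) (1/2), by positivity, by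
    have := min_le_right (δ/2) (1/2); linarith, fun w hw => ?_⟩
  have h2 := h (y := w) (by
    rw [Real.dist_eq, sub_zero]
    have := min_le_left (δ/2) (1/2)
    linarith)
  have h3 : Ring.choose (-a) 2 = a * (a+1) / 2 := by
    have := Ring.descPochhammer_eq_factorial_smul_choose (-a) 2
    simp [descPochhammer_succ_right, Nat.factorial, Polynomial.smeval_mul,
      Polynomial.smeval_sub] at this
    linarith
  have h4 : (binomialSeries ℝ (-a)).partialSum 3 w = 1 - a * w + a * (a + 1) / 2 * w ^ 2 := by
    simp [FormalMultilinearSeries.partialSum, Finset.sum_range_succ, 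
      binomialSeries, h3]
    ring
  rw [zero_add, h4] at h2
  simpa using h2

/-! ### The discrete Laplacian of powers of the norm -/

lemma znorm_nonneg {d : ℕ} (x : ZV d) : 0 ≤ znorm x := Real.sqrt_nonneg _

lemma znorm_sq {d : ℕ} (x : ZV d) : znorm x ^ 2 = ∑ j, ((x j : ℝ)) ^ 2 :=
  Real.sq_sqrt (Finset.sum_nonneg fun _ _ => sq_nonneg _)

lemma abs_le_znorm {d : ℕ} (x : ZV d) (j : Fin d) : |(x j : ℝ)| ≤ znorm x := by
  apply abs_le_of_sq_le_sq _ (znorm_nonneg x)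
  rw [znorm_sq]
  exact Finset.single_le_sum (f := fun j => ((x j : ℝ)) ^ 2) (fun _ _ => sq_nonneg _)
    (Finset.mem_univ j)

/-- The change of the squared norm under a step. -/
noncomputable def incr {d : ℕ} (x : ZV d) (i : Fin d × Bool) : ℝ :=
  1 + (if i.2 then 2 else -2) * (x i.1 : ℝ)

lemma znorm_step {d : ℕ} (x : ZV d) (i : Fin d × Bool) :
    znorm (x + st i) ^ 2 = znorm x ^ 2 + incr x i := by
  rw [znorm_sq, znorm_sq, ← Finset.add_sum_erase _ _ (Finset.mem_univ i.1),
    ← Finset.add_sum_erase Finset.univ (fun j => ((x j : ℝ)) ^ 2) (Finset.mem_univ i.1)]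
  have : ∑ j ∈ Finset.univ.erase i.1, (((x + st i) j : ℤ) : ℝ) ^ 2 =
      ∑ j ∈ Finset.univ.erase i.1, ((x j : ℝ)) ^ 2 := by
    apply Finset.sum_congr rfl
    intro j hj
    rw [Finset.mem_erase] at hj
    simp [st, Pi.single_eq_of_ne hj.1]
  rw [this]
  simp only [st, incr, Pi.add_apply, Pi.single_eq_same]
  split_ifs <;> push_cast <;> ring

lemma abs_incr {d : ℕ} (x : ZV d) (i : Fin d × Bool) : |incr x i| ≤ 1 + 2 * znorm x := by
  have h := abs_le.1 (abs_le_znorm x i.1)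
  unfold incr
  rw [abs_le]
  split_ifs <;> constructor <;> linarith [h.1, h.2]

lemma znorm_step_abs {d : ℕ} (x : ZV d) (i : Fin d × Bool) :
    znorm (x + st i) ≤ znorm x + 1 ∧ znorm x ≤ znorm (x + st i) + 1 := by
  have key : ∀ (x : ZV d) (i : Fin d × Bool), znorm (x + st i) ≤ znorm x + 1 := by
    intro x i
    refine (pow_le_pow_iff_left₀ (znorm_nonneg _) (by linarith [znorm_nonneg x]) two_ne_zero).1 ?_
    rw [znorm_step]
    nlinarith [abs_le.1 (abs_incr x i)]
  refine ⟨key x i, ?_⟩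
  have := key (x + st i) (i.1, !i.2)
  have h2 : x + st i + st (i.1, !i.2) = x := by
    rw [add_assoc]
    convert add_zero x
    unfold st
    rw [← Pi.single_add]
    cases i.2 <;> simp
  rwa [h2] at this

lemma sum_incr {d : ℕ} (x : ZV d) : ∑ i, incr x i = 2 * d := by
  rw [Fintype.sum_prod_type]
  simp [incr]
  rw [Finset.sum_congr rfl (g := fun _ => (2:ℝ)) (fun j _ => by ring)]
  simp [mul_comm]

lemma sum_incr_sq {d : ℕ} (x : ZV d) : ∑ i, incr x i ^ 2 = 2 * d + 8 * znorm x ^ 2 := by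
  rw [Fintype.sum_prod_type, znorm_sq]
  simp [incr]
  rw [Finset.sum_congr rfl (g := fun j => (2:ℝ) + 8 * (x j : ℝ) ^ 2) (fun j _ => by ring)]
  rw [Finset.sum_add_distrib, ← Finset.mul_sum]
  simp [mul_comm]

lemma pow_eq_rpow (p : ℕ) (r : ℝ) (hr : 0 ≤ r) : (r ^ p)⁻¹ = (r ^ 2) ^ (-((p:ℝ) / 2)) := by
  rw [← Real.rpow_natCast r 2, ← Real.rpow_mul hr, ← Real.rpow_natCast r p, ← Real.rpow_neg hr]
  congr 1
  push_cast
  ring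

lemma laplace {d : ℕ} (p : ℕ) : ∃ K > (0:ℝ), ∃ r₀ ≥ (1:ℝ), ∀ x : ZV d, r₀ ≤ znorm x →
    |∑ i, (znorm (x + st i) ^ p)⁻¹ - (znorm x ^ p)⁻¹ *
      (2 * d + p * (p + 2 - d) / znorm x ^ 2)| ≤ K * ((znorm x ^ p)⁻¹ / znorm x ^ 3) := by
  obtain ⟨K, hK, δ, hδ, hδ1, hT⟩ := taylor2 ((p:ℝ)/2)
  refine ⟨2 * d * (K * 27) + (p:ℝ)/2 * ((p:ℝ)/2+1) * d + 1, by positivity, max 1 (3/δ),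
    le_max_left _ _, ?_⟩
  intro x hx
  set r := znorm x with hr
  have hr1 : 1 ≤ r := (le_max_left _ _).trans hx
  have hr0 : 0 < r := by linarith
  have hrδ : 3 / r ≤ δ := by
    have := (le_max_right _ _).trans hx
    rw [div_le_iff₀ hδ] at this
    rw [div_le_iff₀ hr0]; linarith
  set a : ℝ := (p:ℝ)/2 with ha
  set w : Fin d × Bool → ℝ := fun i => incr x i / r ^ 2 with hw
  have hwb : ∀ i, |w i| ≤ 3 / r := by
    intro i
    rw [hw]
    simp only
    rw [abs_div, abs_of_pos (by positivity : 0 < r^2), div_le_div_iff₀ (by positivity) hr0]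
    have := abs_incr x i
    nlinarith
  have hterm : ∀ i, (znorm (x + st i) ^ p)⁻¹ = (r ^ p)⁻¹ * (1 + w i) ^ (-a) := by
    intro i
    rw [pow_eq_rpow p _ (znorm_nonneg _), pow_eq_rpow p r hr0.le, znorm_step,
      ← Real.mul_rpow (by positivity)]
    · congr 1
      rw [hw]
      simp only
      field_simp
      rfl
    · have := (abs_le.1 ((hwb i).trans hrδ)).1
      linarith
  have hsum : ∑ i, (1 - a * w i + a * (a + 1) / 2 * w i ^ 2) =
      2 * d + p * (p + 2 - d) / r ^ 2 + a * (a + 1) * d / r ^ 4 := by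
    rw [Finset.sum_add_distrib, Finset.sum_sub_distrib, ← Finset.mul_sum, ← Finset.mul_sum]
    have e1 : ∑ i, w i = 2 * d / r ^ 2 := by
      rw [hw, ← Finset.sum_div, sum_incr]
    have e2 : ∑ i, w i ^ 2 = (2 * d + 8 * r ^ 2) / r ^ 4 := by
      rw [hw]
      simp only [div_pow]
      rw [← Finset.sum_div, sum_incr_sq]
      ring
    rw [e1, e2, ha]
    simp
    field_simp
    ring
  have herr : |∑ i, ((1 + w i) ^ (-a) - (1 - a * w i + a * (a + 1) / 2 * w i ^ 2))| ≤
      2 * d * (K * 27) / r ^ 3 := by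
    refine (Finset.abs_sum_le_sum_abs _ _).trans ?_
    have : ∀ i ∈ (Finset.univ : Finset (Fin d × Bool)),
        |(1 + w i) ^ (-a) - (1 - a * w i + a * (a + 1) / 2 * w i ^ 2)| ≤ K * 27 / r ^ 3 := by
      intro i _
      refine (hT (w i) ((hwb i).trans hrδ)).trans ?_
      have h3 : |w i| ^ 3 ≤ (3 / r) ^ 3 := pow_le_pow_left₀ (abs_nonneg _) (hwb i) 3
      calc K * |w i| ^ 3 ≤ K * (3 / r) ^ 3 := by gcongr
        _ = K * 27 / r ^ 3 := by rw [div_pow]; ring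
    refine (Finset.sum_le_sum this).trans (le_of_eq ?_)
    simp
    ring
  have h4 : a * (a + 1) * d / r ^ 4 ≤ a * (a + 1) * d / r ^ 3 := by
    exact div_le_div_of_nonneg_left (by positivity) (by positivity)
      (pow_le_pow_right₀ hr1 (by norm_num))
  have h40 : 0 ≤ a * (a + 1) * d / r ^ 4 := by positivity
  rw [Finset.sum_sub_distrib, hsum] at herr
  simp only [hterm]
  rw [← Finset.mul_sum, ← mul_sub, abs_mul, abs_of_pos (by positivity : 0 < (r ^ p)⁻¹)]
  have : |∑ i, (1 + w i) ^ (-a) - (2 * d + p * (p + 2 - d) / r ^ 2)| ≤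
      (2 * d * (K * 27) + a * (a+1) * d + 1) / r ^ 3 := by
    have h5 : (0:ℝ) ≤ 1 / r ^ 3 := by positivity
    rw [add_div, add_div]
    rw [abs_le] at herr ⊢
    constructor <;> linarith [herr.1, herr.2]
  calc _ ≤ (r ^ p)⁻¹ * ((2 * d * (K * 27) + a * (a+1) * d + 1) / r ^ 3) := by gcongr
    _ = _ := by ring

lemma barrier {d : ℕ} (hd : 3 ≤ d) : ∃ c > (0:ℝ), ∃ r₀ ≥ (1:ℝ), ∀ x : ZV d, r₀ ≤ znorm x →
    (znorm x ^ (d-2))⁻¹ + c * (znorm x ^ (d-1))⁻¹ ≤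
      av (fun y => (znorm y ^ (d-2))⁻¹ + c * (znorm y ^ (d-1))⁻¹) x ∧
    av (fun y => (znorm y ^ (d-2))⁻¹ - c * (znorm y ^ (d-1))⁻¹) x ≤
      (znorm x ^ (d-2))⁻¹ - c * (znorm x ^ (d-1))⁻¹ := by
  obtain ⟨K, hK, r1, hr1, h1⟩ := laplace (d := d) (d-2)
  obtain ⟨L, hL, r2, hr2, h2⟩ := laplace (d := d) (d-1)
  refine ⟨K, hK, max (max r1 r2) L, hr1.le.trans ((le_max_left _ _).trans (le_max_left _ _)), ?_⟩
  intro x hx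
  have g1 := h1 x (((le_max_left _ _).trans (le_max_left _ _)).trans hx)
  have g2 := h2 x (((le_max_right _ _).trans (le_max_left _ _)).trans hx)
  have hrL : L ≤ znorm x := (le_max_right _ _).trans hx
  have hr : 1 ≤ znorm x :=
    hr1.le.trans (((le_max_left _ _).trans (le_max_left _ _)).trans hx)
  have c1 : ((d - 2 : ℕ) : ℝ) = d - 2 := by rw [Nat.cast_sub (by omega)]; norm_num
  have c2 : ((d - 1 : ℕ) : ℝ) = d - 1 := by rw [Nat.cast_sub (by omega)]; norm_num
  have hd' : (3:ℝ) ≤ d := by exact_mod_cast hd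
  rw [c1] at g1
  rw [c2] at g2
  set r := znorm x with hrdef
  have hr0 : 0 < r := by linarith
  have e : r ^ (d-1) = r ^ (d-2) * r := by rw [← pow_succ]; congr 1; omega
  rw [e] at g2 ⊢
  set R := (r ^ (d-2))⁻¹ with hR
  have hR0 : 0 < R := by positivity
  rw [mul_inv, ← hR] at g2 ⊢
  have z1 : ((d:ℝ) - 2) * ((d:ℝ) - 2 + 2 - d) / r ^ 2 = 0 := by ring
  rw [z1, add_zero] at g1
  have z2 : ((d:ℝ) - 1) * ((d:ℝ) - 1 + 2 - d) / r ^ 2 = (d - 1) / r ^ 2 := by ring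
  rw [z2] at g2
  set S1 := ∑ i, (znorm (x + st i) ^ (d-2))⁻¹
  set S2 := ∑ i, (znorm (x + st i) ^ (d-1))⁻¹
  have k2 : R * r⁻¹ * (2 * d) + R / r ^ 3 ≤ S2 := by
    have := (abs_le.1 g2).1
    have k3 : L * (R * r⁻¹ / r ^ 3) ≤ R / r ^ 3 := by
      rw [show L * (R * r⁻¹ / r ^ 3) = (L / r) * (R / r ^ 3) by field_simp]
      have : L / r ≤ 1 := (div_le_one hr0).2 hrL
      have : 0 ≤ R / r ^ 3 := by positivity
      nlinarith
    have k4 : R * r⁻¹ * ((d - 1) / r ^ 2) = (d - 1) * (R / r ^ 3) := by field_simp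
    have k5 : 2 * (R / r ^ 3) ≤ (d - 1) * (R / r ^ 3) := by
      gcongr; linarith
    rw [mul_add, k4] at this
    linarith
  have k1 := abs_le.1 g1
  have k6 : K * (R * r⁻¹ * (2 * d)) + K * (R / r ^ 3) ≤ K * S2 := by
    rw [← mul_add]; gcongr
  have hd0 : (0:ℝ) < 2 * d := by linarith
  constructor
  · unfold av
    rw [Finset.sum_add_distrib, ← Finset.mul_sum, le_div_iff₀ hd0]
    change _ ≤ S1 + K * S2
    linarith [k1.1]
  · unfold av
    rw [Finset.sum_sub_distrib, ← Finset.mul_sum, div_le_iff₀ hd0]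
    change S1 - K * S2 ≤ _
    linarith [k1.2]

/-! ### Numerical estimates and conclusion -/

lemma num_upper (q : ℕ) (c n k ρ : ℝ) (hc : 0 < c) (hn : 2 ≤ n) (hnc : 4 * c ≤ n) (hk : 1 < k)
    (hρ : n + k - 1 < ρ) :
    ((n ^ q)⁻¹ * (1 - c / (n - 1)))⁻¹ * ((ρ ^ q)⁻¹ - c * (ρ ^ (q + 1))⁻¹) ≤
      ((1 + k / n) ^ q)⁻¹ + (q + 4 * c) / n := by
  have hn0 : 0 < n := by linarith
  have hρ0 : 0 < ρ := by linarith
  set e := c / (n - 1) with he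
  have he0 : 0 < e := div_pos hc (by linarith)
  have he1 : e ≤ 2 * c / n := by
    rw [he, div_le_div_iff₀ (by linarith) hn0]; nlinarith
  have he2 : 2 * c / n ≤ 1 / 2 := by
    rw [div_le_div_iff₀ hn0 (by norm_num)]; linarith
  have hα1 : n / ρ ≤ 1 := by rw [div_le_one hρ0]; linarith
  have hα0 : 0 < n / ρ := by positivity
  have hαq : (n / ρ) ^ q ≤ 1 := pow_le_one₀ hα0.le hα1
  have hαq0 : 0 < (n / ρ) ^ q := by positivity
  have hinv : (1 - e)⁻¹ ≤ 1 + 2 * e := by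
    rw [inv_le_iff_one_le_mul₀ (by linarith)]; nlinarith
  have h1 : ((n ^ q)⁻¹ * (1 - e))⁻¹ * ((ρ ^ q)⁻¹ - c * (ρ ^ (q + 1))⁻¹) ≤
      (n / ρ) ^ q * (1 - e)⁻¹ := by
    have h2 : ((n ^ q)⁻¹ * (1 - e))⁻¹ * ((ρ ^ q)⁻¹ - c * (ρ ^ (q + 1))⁻¹) ≤
        ((n ^ q)⁻¹ * (1 - e))⁻¹ * (ρ ^ q)⁻¹ := by
      have : 0 < 1 - e := by linarith
      have h3 : 0 ≤ c * (ρ ^ (q + 1))⁻¹ := by positivity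
      gcongr
      linarith
    refine h2.trans (le_of_eq ?_)
    rw [mul_inv, inv_inv, div_pow]
    ring
  have h2 : (n / ρ) ^ q * (1 - e)⁻¹ ≤ (n / ρ) ^ q + 4 * c / n := by
    calc (n / ρ) ^ q * (1 - e)⁻¹ ≤ (n / ρ) ^ q * (1 + 2 * e) := by gcongr
      _ = (n / ρ) ^ q + (n / ρ) ^ q * (2 * e) := by ring
      _ ≤ (n / ρ) ^ q + 1 * (2 * e) := by gcongr
      _ ≤ _ := by rw [show 4 * c / n = 2 * (2 * c / n) by ring]; linarith
  have h3 : (n / ρ) ^ q - q / n ≤ ((1 + k / n) ^ q)⁻¹ := by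
    have h4 : n / ρ * (1 - 1 / n) ≤ (1 + k / n)⁻¹ := by
      rw [show (1 + k / n)⁻¹ = n / (n + k) by field_simp,
        show n / ρ * (1 - 1 / n) = (n - 1) / ρ by field_simp,
        div_le_div_iff₀ hρ0 (by linarith)]
      nlinarith
    have h5 : 0 ≤ 1 - 1 / n := by
      rw [sub_nonneg, div_le_one hn0]; linarith
    have h6 := one_add_mul_le_pow (a := -(1 / n)) (by linarith) q
    have h7 : (n / ρ * (1 - 1 / n)) ^ q ≤ ((1 + k / n)⁻¹) ^ q :=
      pow_le_pow_left₀ (by positivity) h4 q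
    rw [mul_pow, inv_pow] at h7
    have h8 : (n / ρ) ^ q * (1 - q / n) ≤ (n / ρ) ^ q * (1 - 1 / n) ^ q := by
      gcongr
      rw [sub_eq_add_neg 1 (1 / n)]
      refine le_trans (le_of_eq ?_) h6
      ring
    have h9 : (n / ρ) ^ q * (q / n) ≤ 1 * (q / n) := by gcongr
    linarith
  rw [add_div]
  linarith

lemma num_lower (q : ℕ) (c n k ρ : ℝ) (hc : 0 < c) (hn : 2 ≤ n) (hnc : 4 * c ≤ n) (hk : 1 < k)
    (hρn : n < ρ) (hρ : ρ ≤ n + k) :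
    ((1 + k / n) ^ q)⁻¹ - (q + 4 * c) / n ≤
    (((n - 1) ^ q)⁻¹ * (1 + c / (n - 1)))⁻¹ * ((ρ ^ q)⁻¹ + c * (ρ ^ (q + 1))⁻¹) := by
  have hn0 : 0 < n := by linarith
  have hn1 : 0 < n - 1 := by linarith
  have hρ0 : 0 < ρ := by linarith
  set e := c / (n - 1) with he
  have he0 : 0 < e := div_pos hc (by linarith)
  have he1 : e ≤ 4 * c / n := by
    rw [he, div_le_div_iff₀ (by linarith) hn0]; nlinarith
  set β := (n - 1) / ρ with hβ
  have hβ0 : 0 < β := by positivity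
  have hβ1 : β ≤ 1 := by rw [hβ, div_le_one hρ0]; linarith
  have hβq : β ^ q ≤ 1 := pow_le_one₀ hβ0.le hβ1
  have hinv : 1 - e ≤ (1 + e)⁻¹ := by
    rw [inv_eq_one_div, le_div_iff₀ (by linarith)]; nlinarith
  have h1 : β ^ q * (1 + e)⁻¹ ≤
      (((n - 1) ^ q)⁻¹ * (1 + e))⁻¹ * ((ρ ^ q)⁻¹ + c * (ρ ^ (q + 1))⁻¹) := by
    have h2 : (((n - 1) ^ q)⁻¹ * (1 + e))⁻¹ * (ρ ^ q)⁻¹ ≤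
        (((n - 1) ^ q)⁻¹ * (1 + e))⁻¹ * ((ρ ^ q)⁻¹ + c * (ρ ^ (q + 1))⁻¹) := by
      have h3 : 0 ≤ c * (ρ ^ (q + 1))⁻¹ := by positivity
      gcongr
      linarith
    refine (le_of_eq ?_).trans h2
    rw [mul_inv, inv_inv, hβ, div_pow]
    ring
  have h2 : β ^ q - e ≤ β ^ q * (1 + e)⁻¹ := by
    calc β ^ q - e = β ^ q - 1 * e := by ring
      _ ≤ β ^ q - β ^ q * e := by gcongr
      _ = β ^ q * (1 - e) := by ring
      _ ≤ _ := by gcongr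
  have h3 : ((1 + k / n) ^ q)⁻¹ - q / n ≤ β ^ q := by
    have h4 : (1 + k / n)⁻¹ * (1 - 1 / n) ≤ β := by
      rw [show (1 + k / n)⁻¹ * (1 - 1 / n) = (n - 1) / (n + k) by field_simp, hβ]
      gcongr
    have h5 : 0 ≤ 1 - 1 / n := by
      rw [sub_nonneg, div_le_one hn0]; linarith
    have h6 := one_add_mul_le_pow (a := -(1 / n)) (by linarith) q
    have h7 : ((1 + k / n)⁻¹ * (1 - 1 / n)) ^ q ≤ β ^ q :=
      pow_le_pow_left₀ (by positivity) h4 q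
    rw [mul_pow, inv_pow] at h7
    have h8 : ((1 + k / n) ^ q)⁻¹ * (1 - q / n) ≤ ((1 + k / n) ^ q)⁻¹ * (1 - 1 / n) ^ q := by
      gcongr
      rw [sub_eq_add_neg 1 (1 / n)]
      refine le_trans (le_of_eq ?_) h6
      ring
    have h10 : ((1 + k / n) ^ q)⁻¹ ≤ 1 := by
      apply inv_le_one_of_one_le₀
      apply one_le_pow₀
      have : 0 ≤ k / n := by positivity
      linarith
    have h9 : ((1 + k / n) ^ q)⁻¹ * (q / n) ≤ 1 * (q / n) := by gcongr
    linarith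
  rw [add_div]
  linarith

lemma zball_finite (d : ℕ) (r : ℝ) : (zball d r).Finite := by
  apply (Set.finite_Icc (fun _ : Fin d => -⌊r⌋) (fun _ => ⌊r⌋)).subset
  intro x hx
  have hx : znorm x ≤ r := hx
  have h : ∀ j, |x j| ≤ ⌊r⌋ := by
    intro j
    rw [Int.le_floor]
    push_cast
    exact (abs_le_znorm x j).trans hx
  exact ⟨fun j => (abs_le.1 (h j)).1, fun j => (abs_le.1 (h j)).2⟩

lemma cap_mul_hm {d : ℕ} (P : ZV d → Measure (ℕ → ZV d)) (A : Set (ZV d)) (hA : A.Finite)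
    (x : ZV d) (hx : x ∈ A) : capac P A * harmMeas P A x = escProb P A x := by
  unfold harmMeas
  by_cases h : capac P A = 0
  · rw [h, zero_mul]
    have := hA.to_subtype
    have := Fintype.ofFinite A
    unfold capac at h
    rw [tsum_fintype, Finset.sum_eq_zero_iff_of_nonneg
      (f := fun b : A => escProb P A b) (fun _ _ => ENNReal.toReal_nonneg)] at h
    exact (h ⟨x, hx⟩ (Finset.mem_univ _)).symm
  · field_simp

/-- Two-sided estimate on the hitting probability of a ball. -/
lemma hit_ball {d : ℕ} (hd : 3 ≤ d) (P : ZV d → Measure (ℕ → ZV d))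
    [∀ x, IsProbabilityMeasure (P x)] (hP : IsSRW d P) :
    ∃ C > (0:ℝ), ∃ n₀ : ℕ, 0 < n₀ ∧ ∀ n : ℕ, n₀ ≤ n → ∀ k : ℝ, 1 < k →
      ∀ y ∈ ibdry (zball d (n + k)),
        |(P y).real (hitEv (zball d n)) - ((1 + k / n) ^ (d - 2))⁻¹| ≤ C / n := by
  obtain ⟨c, hc, r₀, hr₀, hbar⟩ := barrier hd
  have hd1 : d - 1 = (d - 2) + 1 := by omega
  have hq : d - 2 ≠ 0 := by omega
  rw [hd1] at hbar
  generalize d - 2 = q at *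
  obtain ⟨N, hN⟩ := exists_nat_ge (max r₀ (max 2 (4 * c)))
  refine ⟨q + 4 * c, by positivity, N + 1, by omega, ?_⟩
  intro n hn k hk y hy
  have hnN : (N:ℝ) ≤ n := by exact_mod_cast (by omega : N ≤ n)
  have hnr : r₀ ≤ n := (le_max_left _ _).trans (hN.trans hnN)
  have hn2 : (2:ℝ) ≤ n := ((le_max_left _ _).trans (le_max_right _ _)).trans (hN.trans hnN)
  have hnc : 4 * c ≤ n := ((le_max_right _ _).trans (le_max_right _ _)).trans (hN.trans hnN)
  have hn0 : (0:ℝ) < n := by linarith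
  have hn1 : (0:ℝ) < n - 1 := by linarith
  obtain ⟨hy1, z, hz, hyz⟩ := hy
  have hy1 : znorm y ≤ n + k := hy1
  have hz : n + k < znorm z := not_le.1 hz
  obtain ⟨i, rfl⟩ := (zadj_iff _ _).1 hyz
  have hy2 : n + k - 1 < znorm y := by linarith [(znorm_step_abs y i).1]
  have hyA : y ∉ zball d n := fun h => by
    have h : znorm y ≤ n := h
    linarith
  have hout : ∀ x ∉ zball d n, (n:ℝ) < znorm x := fun x hx => not_le.1 hx
  have hnb : ∀ x ∉ zball d n, ∀ i, x + st i ∈ zball d n →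
      (n:ℝ) - 1 < znorm (x + st i) ∧ znorm (x + st i) ≤ n := by
    intro x hx i h
    have := hout x hx
    have h2 := (znorm_step_abs x i).2
    exact ⟨by linarith, h⟩
  have he : c / (n - 1) < 1 := by rw [div_lt_one hn1]; linarith
  have he' : 0 < 1 - c / ((n:ℝ) - 1) := by linarith
  rw [abs_le]
  constructor
  · set M : ℝ := (((n:ℝ) - 1) ^ q)⁻¹ * (1 + c / (n - 1)) with hM
    have hM0 : 0 < M := by positivity
    have key := hit_lower (by omega) P hP (zball d n)
      (fun y => M⁻¹ * ((znorm y ^ q)⁻¹ + c * (znorm y ^ (q + 1))⁻¹)) ?_ ?_ ?_ y hyA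
    · have := num_lower q c n k (znorm y) hc hn2 hnc hk (hout y hyA) hy1
      linarith
    · intro x hx
      rw [av_mul]
      have := (hbar x (hnr.trans (hout x hx).le)).1
      gcongr
    · intro x hx i hi
      obtain ⟨h1, h2⟩ := hnb x hx i hi
      rw [inv_mul_le_iff₀ hM0, mul_one, hM]
      have hp : 0 < znorm (x + st i) := by linarith
      calc (znorm (x + st i) ^ q)⁻¹ + c * (znorm (x + st i) ^ (q + 1))⁻¹
          = (znorm (x + st i) ^ q)⁻¹ * (1 + c / znorm (x + st i)) := by
            rw [pow_succ, mul_inv]; ring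
        _ ≤ _ := by gcongr
    · intro δ hδ
      apply (zball_finite d (max 1 ((1 + c) / (δ * M)))).subset
      intro x hx
      have hx : δ < M⁻¹ * ((znorm x ^ q)⁻¹ + c * (znorm x ^ (q + 1))⁻¹) := hx
      change znorm x ≤ _
      by_contra! hcon
      rw [max_lt_iff] at hcon
      have hp : 0 < znorm x := by linarith [hcon.1]
      have h1 : (znorm x ^ q)⁻¹ ≤ (znorm x)⁻¹ :=
        inv_anti₀ hp (le_self_pow₀ hcon.1.le hq)
      have h2 : (znorm x ^ (q+1))⁻¹ ≤ (znorm x)⁻¹ :=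
        inv_anti₀ hp (le_self_pow₀ hcon.1.le (by omega))
      have h3 : M⁻¹ * ((znorm x ^ q)⁻¹ + c * (znorm x ^ (q + 1))⁻¹) ≤
          M⁻¹ * ((znorm x)⁻¹ + c * (znorm x)⁻¹) := by gcongr
      have h4 : M⁻¹ * ((znorm x)⁻¹ + c * (znorm x)⁻¹) = (1 + c) / (M * znorm x) := by
        field_simp
      rw [h4] at h3
      have h5 := hx.trans_le h3
      rw [lt_div_iff₀ (by positivity)] at h5
      have h6 := hcon.2
      rw [div_lt_iff₀ (by positivity)] at h6
      linarith
  · set m : ℝ := (((n:ℝ)) ^ q)⁻¹ * (1 - c / (n - 1)) with hm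
    have hm0 : 0 < m := by positivity
    have key := hit_upper (by omega) P hP (zball d n)
      (fun y => m⁻¹ * ((znorm y ^ q)⁻¹ - c * (znorm y ^ (q + 1))⁻¹)) ?_ ?_ ?_ y hyA
    · have := num_upper q c n k (znorm y) hc hn2 hnc hk hy2
      linarith
    · intro x hx
      have hx' := hout x hx
      have hp : 0 < znorm x := by linarith
      have : (znorm x ^ q)⁻¹ - c * (znorm x ^ (q + 1))⁻¹ =
          (znorm x ^ q)⁻¹ * (1 - c / znorm x) := by
            rw [pow_succ, mul_inv]; ring
      rw [this]
      have h2 : 0 ≤ 1 - c / znorm x := by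
        rw [sub_nonneg, div_le_one hp]; linarith
      positivity
    · intro x hx
      rw [av_mul]
      have := (hbar x (hnr.trans (hout x hx).le)).2
      gcongr
    · intro x hx i hi
      obtain ⟨h1, h2⟩ := hnb x hx i hi
      rw [le_inv_mul_iff₀ hm0, mul_one, hm]
      have hp : 0 < znorm (x + st i) := by linarith
      calc _ ≤ (znorm (x + st i) ^ q)⁻¹ * (1 - c / znorm (x + st i)) := by gcongr
        _ = _ := by rw [pow_succ, mul_inv]; ring

/-- For `d ≥ 3`, `x ∈ ∂B(n)`, `k > 1`, as `n → ∞`: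
`P_x[τ₁(∂B(n+k)) < τ₁(B(n))] = cap(B(n)) hm_{B(n)}(x) / (1 − (1+k/n)^{−(d−2)} + O(n^{−1}))`,
with the `O(n^{−1})` uniform in `k`. -/
theorem escape_to_outer_sphere
    (d : ℕ) (hd : 3 ≤ d)
    (P : ZV d → Measure (ℕ → ZV d)) (hprob : ∀ x, IsProbabilityMeasure (P x))
    (hP : IsSRW d P) :
    ∃ C > (0 : ℝ), ∃ n₀ : ℕ, ∀ n : ℕ, n₀ ≤ n → ∀ k : ℝ, 1 < k →
      ∀ x ∈ ibdry (zball d n), ∃ ε : ℝ, |ε| ≤ C / n ∧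
        (P x {ω | hitT (ibdry (zball d (n + k))) ω < hitT (zball d n) ω}).toReal
            * (1 - (1 + k / n) ^ (-((d : ℝ) - 2)) + ε)
          = capac P (zball d n) * harmMeas P (zball d n) x := by
  obtain ⟨C, hC, n₀, hn₀, H⟩ := hit_ball hd P hP
  refine ⟨C, hC, n₀, fun n hn k hk x hx => ?_⟩
  have hn0 : (0:ℝ) < n := by exact_mod_cast (by omega : 0 < n)
  have hxA : x ∈ zball d n := hx.1
  rw [cap_mul_hm P _ (zball_finite d n) x hxA]
  have hpow : (1 + k / n) ^ (-((d : ℝ) - 2)) = ((1 + k / (n:ℝ)) ^ (d - 2))⁻¹ := by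
    have h1 : 0 ≤ 1 + k / (n:ℝ) := by positivity
    rw [Real.rpow_neg h1, ← Real.rpow_natCast, Nat.cast_sub (by omega)]
    norm_num
  rw [hpow]
  set t := ((1 + k / (n:ℝ)) ^ (d - 2))⁻¹
  obtain ⟨h1, h2⟩ := compare_esc (by omega) P hP (zball d n) (zball d (n + k)) (zball_finite d _)
    (1 - t - C / n) (1 - t + C / n)
    (fun y hy => by linarith [(abs_le.1 (H n hn k hk y hy)).2])
    (fun y hy => by linarith [(abs_le.1 (H n hn k hk y hy)).1]) x
    (fun i => by
      have h3 := (znorm_step_abs x i).1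
      have h4 : znorm x ≤ n := hxA
      change znorm (x + st i) ≤ n + k
      linarith)
  set p := (P x {ω | hitT (ibdry (zball d (n + k))) ω < hitT (zball d n) ω}).toReal with hp
  have hp0 : 0 ≤ p := ENNReal.toReal_nonneg
  rcases hp0.eq_or_lt with h0 | h0
  · refine ⟨0, by rw [abs_zero]; positivity, ?_⟩
    rw [← h0] at h1 h2 ⊢
    linarith
  · refine ⟨escProb P (zball d n) x / p - (1 - t), ?_, by field_simp; ring⟩
    rw [← le_div_iff₀ h0] at h1
    rw [← div_le_iff₀ h0] at h2
    rw [abs_le]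
    constructor <;> linarith
end
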